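/- arXiv:2507.17484 — 2 statements merged into one kernel-verified Lean document; each statement's English description precedes it below -/
import Mathlib

section
/- For every α > −2 and h ∈ ℝ, the limit lim_{n→∞} (1/n²) ln Z_{n;α,h} exists and equals sup_{u∈[0,1]} ((α/6)u³ + (h/2)u − (1/2)I(u)). -/
/-!
Write `X` for the symmetric 0/1 adjacency array of a configuration `x`, so that `6 T(x) = tr X³`
and `2 E(x) = ∑ᵢⱼ Xᵢⱼ`.

Lower bound (`le_log_Zet`): the Gibbs variational inequality with the product Bernoulli(`u`) law
gives `log Z ≥ (α/n) C(n,3) u³ + h C(n,2) u - C(n,2) I(u)`, whose right-hand side divided by `n²`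
tends to `φ(u)`; this holds for every `u ∈ (0,1)`, and `φ` is continuous on `[0,1]`.

Upper bound (`log_Zet_le`): fix `ε > 0`. By weak regularity (`exists_net`), the configurations are
covered by `exp (O_ε(n))` balls of cut-norm radius `ε n²`. Let `K` be the set of configurations
assigned to one ball and `m` its barycentre. By the counting lemma (`tri_close`) the Hamiltonian
on `K` is within `O(ε n²)` of its multilinear extension at `m`, and by subadditivity of entropy
(`log_card_le`) `log |K| ≤ -∑ₑ I(mₑ)`. The ball therefore contributes at most the exponential of
the mean-field functional at `m`, up to `O(ε n²)` (`ball_sum_le`).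

The mean-field functional on symmetric arrays `M` with entries in `[0,1]` is at most `n² sup φ`
(`meanfield_le`). For `α ≥ 0` this follows from `tr M³ ≤ n ∑ᵢⱼ Mᵢⱼ³`. For `-2 < α ≤ 0`, let `p` be
the mean entry of `M`. Then `tr M³ ≥ n³p³ - n ‖M - p‖²` (`tri_ge`), while the convexity of
`I(u) - u²` gives `∑ᵢⱼ I(Mᵢⱼ) ≥ n² I(p) + ‖M - p‖²`, and the second quadratic term outweighs
the first, so the constant array `p` does at least as well as `M`.
-/

open MeasureTheory Filter ProbabilityTheory Topology

noncomputable section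

/-- The edge set of the complete graph on `n` vertices: unordered pairs of distinct vertices. -/
abbrev Edge (n : ℕ) := {e : Sym2 (Fin n) // ¬ e.IsDiag}

/-- A configuration `x ∈ {0,1}^{E_n}`, i.e. a simple graph on `[n]`. -/
abbrev Config (n : ℕ) := Edge n → Bool

/-- `E(x)`: the number of edges of the configuration `x`. -/
def edgeCount (n : ℕ) (x : Config n) : ℕ :=
  (Finset.univ.filter fun e : Edge n => x e).card

/-- `T(x)`: the number of triangles of the configuration `x` (one for each 3-element
set of vertices all of whose connecting edges are present). -/
def triangleCount (n : ℕ) (x : Config n) : ℕ :=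
  ((Finset.powersetCard 3 (Finset.univ : Finset (Fin n))).filter
    (fun s => ∀ e : Edge n, (∀ v ∈ (e : Sym2 (Fin n)), v ∈ s) → x e)).card

/-- `⌊T(x)/n⌋` as a real number (natural division is floor division). -/
def floorTn (n : ℕ) (x : Config n) : ℝ := ((triangleCount n x / n : ℕ) : ℝ)

/-- `{T(x)/n}`: the fractional part of `T(x)/n`. -/
def fracTn (n : ℕ) (x : Config n) : ℝ :=
  (triangleCount n x : ℝ) / n - floorTn n x

/-- The modified Hamiltonian `Ĥ_{n;α,h}(x) = α⌊T(x)/n⌋ + h E(x)`. -/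
def hamHat (n : ℕ) (α h : ℝ) (x : Config n) : ℝ :=
  α * floorTn n x + h * (edgeCount n x : ℝ)

/-- The edge-triangle Hamiltonian `H_{n;α,h}(x) = (α/n) T(x) + h E(x)`. -/
def ham (n : ℕ) (α h : ℝ) (x : Config n) : ℝ :=
  (α / n) * (triangleCount n x : ℝ) + h * (edgeCount n x : ℝ)

/-- The partition function `Ẑ_{n;α,h}`. -/
def Zhat (n : ℕ) (α h : ℝ) : ℝ := ∑ x : Config n, Real.exp (hamHat n α h x)

/-- The partition function `Z_{n;α,h}`. -/
def Zet (n : ℕ) (α h : ℝ) : ℝ := ∑ x : Config n, Real.exp (ham n α h x)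

/-- Expectation `Ê_{n;α,h}` with respect to the Gibbs measure of `Ĥ`. -/
def expHat (n : ℕ) (α h : ℝ) (f : Config n → ℝ) : ℝ :=
  (∑ x : Config n, f x * Real.exp (hamHat n α h x)) / Zhat n α h

/-- Expectation `E_{n;α,h}` with respect to the Gibbs measure of `H`. -/
def expEt (n : ℕ) (α h : ℝ) (f : Config n → ℝ) : ℝ :=
  (∑ x : Config n, f x * Real.exp (ham n α h x)) / Zet n α h

/-- Variance `V̂ar_{n;α,h}` with respect to the Gibbs measure of `Ĥ`. -/
def varHat (n : ℕ) (α h : ℝ) (f : Config n → ℝ) : ℝ :=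
  expHat n α h (fun x => (f x - expHat n α h f) ^ 2)

/-- Probability of an event under the Gibbs measure of `Ĥ`. -/
def probHat (n : ℕ) (α h : ℝ) (A : Config n → Prop) : ℝ :=
  expHat n α h (fun x => Set.indicator {y | A y} (fun _ => (1 : ℝ)) x)

/-- `I(u) = u ln u + (1-u) ln (1-u)` (with the convention `ln 0 = 0`, so `I(0)=I(1)=0`). -/
def Ifun (u : ℝ) : ℝ := u * Real.log u + (1 - u) * Real.log (1 - u)

/-- The variational functional `u ↦ (a/6)u³ + (b/2)u − (1/2)I(u)`. -/
def phiET (a b u : ℝ) : ℝ := a / 6 * u ^ 3 + b / 2 * u - 1 / 2 * Ifun u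

/-- The limiting free energy `f_{a,b} = sup_{u∈[0,1]} φ_{a,b}(u)`. -/
def freeEnergy (a b : ℝ) : ℝ := sSup (phiET a b '' Set.Icc 0 1)

/-- `W_n` built from the integer part of the normalized triangle count. -/
def Wfl (n : ℕ) (α h : ℝ) (x : Config n) : ℝ :=
  Real.sqrt 6 * (floorTn n x - expHat n α h (floorTn n)) / n

/-- `√6 (T(x)/n − Ê(T/n))/n`, the normalized fluctuation of the triangle density. -/
def Wre (n : ℕ) (α h : ℝ) (x : Config n) : ℝ :=
  Real.sqrt 6 * ((triangleCount n x : ℝ) / n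
    - expHat n α h (fun y => (triangleCount n y : ℝ) / n)) / n

/-- The scaled cumulant generating function of `⌊T/n⌋`. -/
def cgf (n : ℕ) (α h : ℝ) (t : ℝ) : ℝ :=
  6 / (n : ℝ) ^ 2 * Real.log (expHat n α h (fun x => Real.exp (t * floorTn n x)))

/-! ### Adjacency arrays, edge and triangle counts -/

/-- The symmetric `n × n` array with zero diagonal carrying `f` on its off-diagonal entries. -/
def lift {n : ℕ} (f : Edge n → ℝ) (i j : Fin n) : ℝ :=
  if hij : i = j then 0 else f ⟨s(i, j), by simpa using hij⟩

/-- The real-valued 0/1 edge weights of a configuration. -/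
def wt {n : ℕ} (x : Config n) (e : Edge n) : ℝ := if x e then 1 else 0

/-- The trilinear form `(A, B, C) ↦ tr (A B C)`. -/
def tri {n : ℕ} (A B C : Fin n → Fin n → ℝ) : ℝ :=
  ∑ i, ∑ j, ∑ k, A i j * B j k * C k i

/-- `CutLe D c` says that the cut norm of `D` is at most `c`. -/
def CutLe {n : ℕ} (D : Fin n → Fin n → ℝ) (c : ℝ) : Prop :=
  ∀ S S' : Finset (Fin n), |∑ i ∈ S, ∑ j ∈ S', D i j| ≤ c

lemma lift_symm {n : ℕ} (f : Edge n → ℝ) (i j : Fin n) : lift f i j = lift f j i := by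
  unfold lift
  by_cases h : i = j
  · simp [h]
  · have h' : ¬ j = i := fun h' => h h'.symm
    simp only [h, h', dif_neg, not_false_iff]
    congr 2
    exact Sym2.eq_swap

lemma lift_mem {n : ℕ} (f : Edge n → ℝ) (hf : ∀ e, f e ∈ Set.Icc (0:ℝ) 1) (i j : Fin n) :
    lift f i j ∈ Set.Icc (0:ℝ) 1 := by
  unfold lift
  split_ifs
  · simp
  · exact hf _

lemma wt_mem {n : ℕ} (x : Config n) (e : Edge n) : wt x e ∈ Set.Icc (0:ℝ) 1 := by
  unfold wt; split_ifs <;> simp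

lemma sum_lift {n : ℕ} (f : Edge n → ℝ) : ∑ i, ∑ j, lift f i j = 2 * ∑ e, f e := by
  classical
  -- every edge `s(a, b)` comes from exactly the two ordered pairs `(a, b)` and `(b, a)`
  have key : ∀ e : Edge n, ∑ p : Fin n × Fin n,
      (if s(p.1, p.2) = e.1 then f e else 0) = 2 * f e := by
    rintro ⟨e, he⟩
    induction e using Sym2.ind with
    | _ a b =>
      have hab : a ≠ b := by simpa using he
      rw [← Finset.sum_filter]
      have : (Finset.univ.filter fun p : Fin n × Fin n => s(p.1, p.2) = s(a, b))
          = {(a, b), (b, a)} := by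
        ext ⟨i, j⟩
        simp
      rw [this, Finset.sum_pair (by simp [hab])]
      ring
  rw [Finset.mul_sum, ← Finset.sum_congr rfl (fun e _ => key e), Finset.sum_comm (s := Finset.univ (α := Edge n)),
    ← Finset.univ_product_univ, Finset.sum_product]
  refine Finset.sum_congr rfl fun i _ => Finset.sum_congr rfl fun j _ => ?_
  unfold lift
  split_ifs with h
  · symm
    apply Finset.sum_eq_zero
    intro e _
    rw [if_neg]
    intro h'
    apply e.2
    rw [← h']
    simpa using h
  · rw [Finset.sum_eq_single ⟨s(i, j), by simpa using h⟩]
    · simp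
    · intro e _ he
      rw [if_neg]
      intro h'
      exact he (Subtype.ext h'.symm)
    · simp

lemma lift_comp {n : ℕ} (g : ℝ → ℝ) (hg : g 0 = 0) (f : Edge n → ℝ) (i j : Fin n) :
    g (lift f i j) = lift (fun e => g (f e)) i j := by
  unfold lift
  split_ifs <;> simp [hg]

lemma edgeCount_eq {n : ℕ} (x : Config n) : (edgeCount n x : ℝ) = ∑ e, wt x e := by
  simp [edgeCount, wt]

/-- The requirement defining a triangle only concerns the three edges of `{a, b, c}`. -/
lemma forall_edge_triple {n : ℕ} {a b c : Fin n} (hab : a ≠ b) (hac : a ≠ c) (hbc : b ≠ c)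
    (P : Edge n → Prop) :
    (∀ e : Edge n, (∀ v ∈ (e : Sym2 (Fin n)), v ∈ ({a, b, c} : Finset (Fin n))) → P e) ↔
      P ⟨s(a, b), by simpa using hab⟩ ∧ P ⟨s(b, c), by simpa using hbc⟩ ∧
      P ⟨s(c, a), by simpa using hac.symm⟩ := by
  constructor
  · intro H
    refine ⟨H _ ?_, H _ ?_, H _ ?_⟩ <;> simp
  · rintro ⟨h1, h2, h3⟩ ⟨e, he⟩ hv
    induction e using Sym2.ind with
    | _ i j =>
      have hij : i ≠ j := by simpa using he
      simp only [Sym2.mem_iff, Finset.mem_insert, Finset.mem_singleton, forall_eq_or_imp,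
        forall_eq] at hv
      obtain ⟨hi, hj⟩ := hv
      have e1 : s(b, a) = s(a, b) := Sym2.eq_swap
      have e2 : s(c, b) = s(b, c) := Sym2.eq_swap
      have e3 : s(a, c) = s(c, a) := Sym2.eq_swap
      rcases hi with rfl | rfl | rfl <;> rcases hj with rfl | rfl | rfl <;>
        first
        | exact absurd rfl hij
        | assumption
        | (simp only [e1]; assumption)
        | (simp only [e2]; assumption)
        | (simp only [e3]; assumption)

lemma triangleCount_eq {n : ℕ} (x : Config n) :
    (triangleCount n x : ℝ) = tri (lift (wt x)) (lift (wt x)) (lift (wt x)) / 6 := by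
  classical
  set Q : Finset (Fin n × Fin n × Fin n) := Finset.univ.filter fun p =>
    p.1 ≠ p.2.1 ∧ p.1 ≠ p.2.2 ∧ p.2.1 ≠ p.2.2 ∧
    ∀ e : Edge n, (∀ v ∈ (e : Sym2 (Fin n)), v ∈ ({p.1, p.2.1, p.2.2} : Finset (Fin n))) → x e
    with hQ
  have h1 : tri (lift (wt x)) (lift (wt x)) (lift (wt x)) = (Q.card : ℝ) := by
    rw [hQ, Finset.card_filter]
    push_cast
    unfold tri
    rw [← Finset.univ_product_univ, Finset.sum_product]
    refine Finset.sum_congr rfl fun i _ => ?_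
    rw [← Finset.univ_product_univ, Finset.sum_product]
    refine Finset.sum_congr rfl fun j _ => Finset.sum_congr rfl fun k _ => ?_
    by_cases hij : i = j
    · simp [lift, hij]
    by_cases hik : i = k
    · simp [lift, hik]
    by_cases hjk : j = k
    · simp [lift, hjk]
    have hki : ¬ k = i := fun h => hik h.symm
    simp only [forall_edge_triple hij hik hjk (fun e => x e = true)]
    simp only [lift, hij, hjk, hki, hik, dif_neg, not_false_iff, wt, ne_eq, true_and]
    split_ifs <;> simp_all
  -- each triangle is listed by exactly six ordered triples
  have h2 : Q.card = 6 * triangleCount n x := by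
    unfold triangleCount
    rw [mul_comm, Finset.card_eq_sum_card_fiberwise
      (f := fun p : Fin n × Fin n × Fin n => ({p.1, p.2.1, p.2.2} : Finset (Fin n)))
      (t := (Finset.powersetCard 3 (Finset.univ : Finset (Fin n))).filter
        (fun s => ∀ e : Edge n, (∀ v ∈ (e : Sym2 (Fin n)), v ∈ s) → x e))]
    · rw [Finset.sum_const_nat]
      intro s hs
      rw [Finset.mem_filter, Finset.mem_powersetCard] at hs
      obtain ⟨⟨-, hs3⟩, hx⟩ := hs
      obtain ⟨a, b, c, hab, hac, hbc, rfl⟩ := Finset.card_eq_three.1 hs3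
      have : Q.filter (fun p => ({p.1, p.2.1, p.2.2} : Finset (Fin n)) = {a, b, c}) =
          {(a, b, c), (a, c, b), (b, a, c), (b, c, a), (c, a, b), (c, b, a)} := by
        ext ⟨i, j, k⟩
        simp only [hQ, Finset.mem_filter, Finset.mem_univ, true_and, Finset.mem_insert,
          Finset.mem_singleton, Prod.mk.injEq]
        constructor
        · rintro ⟨⟨hij, hik, hjk, -⟩, h⟩
          have hi : i ∈ ({a, b, c} : Finset (Fin n)) := by rw [← h]; simp
          have hj : j ∈ ({a, b, c} : Finset (Fin n)) := by rw [← h]; simp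
          have hk : k ∈ ({a, b, c} : Finset (Fin n)) := by rw [← h]; simp
          simp only [Finset.mem_insert, Finset.mem_singleton] at hi hj hk
          grind
        · intro h
          have hset : ({i, j, k} : Finset (Fin n)) = {a, b, c} := by
            ext v
            simp only [Finset.mem_insert, Finset.mem_singleton]
            grind
          refine ⟨⟨?_, ?_, ?_, ?_⟩, hset⟩
          · grind
          · grind
          · grind
          · intro e hv
            refine hx e fun v hve => ?_
            rw [← hset]
            simpa using hv v hve
      rw [this]
      have hba := hab.symm
      have hca := hac.symm
      have hcb := hbc.symm
      simp [Finset.card_insert_of_notMem, hab, hac, hbc, hba, hca, hcb]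
    · intro p hp
      rw [hQ] at hp
      simp only [Finset.coe_filter, Finset.mem_univ, true_and, Set.mem_ofPred_eq] at hp
      obtain ⟨a, b, c⟩ := p
      simp only [Finset.coe_filter, Finset.mem_powersetCard, Set.mem_ofPred_eq]
      exact ⟨⟨Finset.subset_univ _, Finset.card_eq_three.2 ⟨a, b, c, hp.1, hp.2.1, hp.2.2.1, rfl⟩⟩,
        hp.2.2.2⟩
  rw [h1, h2]
  push_cast
  ring

/-! ### Cut norm and the counting lemma -/

lemma tri_diff {n : ℕ} (A B : Fin n → Fin n → ℝ) :
    tri A A A - tri B B B =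
      (∑ k, ∑ i, ∑ j, A k i * (A i j - B i j) * A j k)
      + (∑ k, ∑ i, ∑ j, B k i * (A i j - B i j) * A j k)
      + (∑ k, ∑ i, ∑ j, B k i * (A i j - B i j) * B j k) := by
  have h1 : ∀ X Y Z : Fin n → Fin n → ℝ, tri X Y Z = ∑ k, ∑ i, ∑ j, X k i * Y i j * Z j k := by
    intro X Y Z; rfl
  have h2 : ∀ X Y Z : Fin n → Fin n → ℝ, tri X Y Z = tri Y Z X := by
    intro X Y Z
    unfold tri
    rw [Finset.sum_comm]
    refine Finset.sum_congr rfl fun j _ => ?_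
    rw [Finset.sum_comm]
    refine Finset.sum_congr rfl fun k _ => Finset.sum_congr rfl fun i _ => ?_
    ring
  have h3 : ∀ X Y Y' Z : Fin n → Fin n → ℝ,
      (∑ k, ∑ i, ∑ j, X k i * (Y i j - Y' i j) * Z j k) = tri X Y Z - tri X Y' Z := by
    intro X Y Y' Z
    rw [h1, h1]
    simp only [mul_sub, sub_mul, Finset.sum_sub_distrib]
  rw [h3, h3, h3, h2 A B A, h2 B A A, h2 B A B, h2 A B B]
  rw [h2 B B A]
  ring

lemma cube_le {n : ℕ} {D : Fin n → Fin n → ℝ} {c : ℝ}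
    (hD : ∀ S S' : Finset (Fin n), ∑ i ∈ S, ∑ j ∈ S', D i j ≤ c)
    (u v : Fin n → ℝ) (hu : ∀ i, u i ∈ Set.Icc (0:ℝ) 1) (hv : ∀ i, v i ∈ Set.Icc (0:ℝ) 1) :
    ∑ i, ∑ j, u i * D i j * v j ≤ c := by
  classical
  -- a linear form on the cube is largest at the indicator of its positive coefficients
  have lin : ∀ (w l : Fin n → ℝ), (∀ i, w i ∈ Set.Icc (0:ℝ) 1) →
      ∑ i, w i * l i ≤ ∑ i ∈ Finset.univ.filter (fun i => 0 < l i), l i := by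
    intro w l hw
    rw [Finset.sum_filter]
    refine Finset.sum_le_sum fun i _ => ?_
    obtain ⟨h0, h1⟩ := hw i
    split_ifs with h
    · nlinarith
    · nlinarith
  set S := Finset.univ.filter (fun i => 0 < ∑ j, D i j * v j) with hS
  calc ∑ i, ∑ j, u i * D i j * v j = ∑ i, u i * ∑ j, D i j * v j := by
        simp only [Finset.mul_sum, mul_assoc]
    _ ≤ ∑ i ∈ S, ∑ j, D i j * v j := lin u _ hu
    _ = ∑ j, v j * ∑ i ∈ S, D i j := by
        rw [Finset.sum_comm]
        refine Finset.sum_congr rfl fun j _ => ?_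
        rw [Finset.mul_sum]
        exact Finset.sum_congr rfl fun i _ => mul_comm _ _
    _ ≤ ∑ j ∈ Finset.univ.filter (fun j => 0 < ∑ i ∈ S, D i j), ∑ i ∈ S, D i j := lin v _ hv
    _ ≤ c := by
        rw [Finset.sum_comm]
        exact hD _ _

/-- The cut norm also bounds the bilinear form at vectors of the solid cube `[0,1]^n`. -/
lemma CutLe.cube {n : ℕ} {D : Fin n → Fin n → ℝ} {c : ℝ} (hD : CutLe D c)
    (u v : Fin n → ℝ) (hu : ∀ i, u i ∈ Set.Icc (0:ℝ) 1) (hv : ∀ i, v i ∈ Set.Icc (0:ℝ) 1) :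
    |∑ i, ∑ j, u i * D i j * v j| ≤ c := by
  rw [abs_le]
  constructor
  · have := cube_le (D := fun i j => - D i j) (c := c) (fun S S' => by
      have := (abs_le.1 (hD S S')).1
      simp only [Finset.sum_neg_distrib]
      linarith) u v hu hv
    simp only [mul_neg, neg_mul, Finset.sum_neg_distrib] at this
    linarith
  · exact cube_le (fun S S' => (abs_le.1 (hD S S')).2) u v hu hv

/-- Counting lemma: the triangle density is Lipschitz for the cut norm. -/
lemma tri_close {n : ℕ} {A B : Fin n → Fin n → ℝ} {c : ℝ}
    (hA : ∀ i j, A i j ∈ Set.Icc (0:ℝ) 1) (hB : ∀ i j, B i j ∈ Set.Icc (0:ℝ) 1)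
    (hD : CutLe (fun i j => A i j - B i j) c) :
    |tri A A A - tri B B B| ≤ 3 * n * c := by
  rw [tri_diff]
  have key : ∀ X Y : Fin n → Fin n → ℝ, (∀ i j, X i j ∈ Set.Icc (0:ℝ) 1) →
      (∀ i j, Y i j ∈ Set.Icc (0:ℝ) 1) →
      |∑ k, ∑ i, ∑ j, X k i * (A i j - B i j) * Y j k| ≤ n * c := by
    intro X Y hX hY
    refine (Finset.abs_sum_le_sum_abs _ _).trans ?_
    calc _ ≤ ∑ _k : Fin n, c := Finset.sum_le_sum fun k _ =>
          hD.cube (X k) (fun j => Y j k) (hX k) (fun j => hY j k)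
      _ = n * c := by simp
  have k1 := key A A hA hA
  have k2 := key B A hB hA
  have k3 := key B B hB hB
  refine (abs_add_le _ _).trans ?_
  have := abs_add_le (∑ k, ∑ i, ∑ j, A k i * (A i j - B i j) * A j k)
    (∑ k, ∑ i, ∑ j, B k i * (A i j - B i j) * A j k)
  linarith

/-! ### Weak regularity -/

/-- The squared Frobenius norm. -/
def frob {n : ℕ} (D : Fin n → Fin n → ℝ) : ℝ := ∑ i, ∑ j, D i j ^ 2

/-- The rank-one array equal to `t` on the rectangle with the given sides and `0` elsewhere. -/
def rect {n : ℕ} (t : ℝ) (S S' : Finset (Fin n)) (i j : Fin n) : ℝ :=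
  if i ∈ S ∧ j ∈ S' then t else 0

lemma sum_rect {n : ℕ} (D : Fin n → Fin n → ℝ) (t : ℝ) (S S' : Finset (Fin n)) :
    ∑ i, ∑ j, D i j * rect t S S' i j = t * ∑ i ∈ S, ∑ j ∈ S', D i j := by
  classical
  have hh : ∀ (U : Finset (Fin n)) (f : Fin n → ℝ),
      ∑ i ∈ U, f i = ∑ i, if i ∈ U then f i else 0 := by intro U f; simp
  rw [hh S, Finset.mul_sum]
  refine Finset.sum_congr rfl fun i _ => ?_
  by_cases hi : i ∈ S
  · rw [if_pos hi, hh S', Finset.mul_sum]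
    refine Finset.sum_congr rfl fun j _ => ?_
    by_cases hj : j ∈ S' <;> simp [rect, hi, hj, mul_comm]
  · simp [rect, hi]

lemma frob_sub_rect {n : ℕ} (D : Fin n → Fin n → ℝ) (t : ℝ) (S S' : Finset (Fin n)) :
    frob (fun i j => D i j - rect t S S' i j) ≤
      frob D - 2 * t * (∑ i ∈ S, ∑ j ∈ S', D i j) + t ^ 2 * n ^ 2 := by
  have h : frob (fun i j => D i j - rect t S S' i j) = frob D
      - 2 * (∑ i, ∑ j, D i j * rect t S S' i j) + ∑ i, ∑ j, rect t S S' i j ^ 2 := by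
    unfold frob
    simp only [Finset.mul_sum, ← Finset.sum_sub_distrib, ← Finset.sum_add_distrib]
    refine Finset.sum_congr rfl fun i _ => Finset.sum_congr rfl fun j _ => ?_
    ring
  have h2 : ∑ i, ∑ j, rect t S S' i j ^ 2 ≤ t ^ 2 * n ^ 2 := by
    calc _ ≤ ∑ _i : Fin n, ∑ _j : Fin n, t ^ 2 := by
          refine Finset.sum_le_sum fun i _ => Finset.sum_le_sum fun j _ => ?_
          unfold rect
          split_ifs
          · exact le_rfl
          · simpa using sq_nonneg t
      _ = _ := by simp; ring
  rw [h, sum_rect]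
  linarith

/-- Weak regularity in covering form: arrays of squared Frobenius norm at most `k ε² n²` are
covered, at cut-norm scale `ε n²`, by `(2 · 4ⁿ)ᵏ` centres. An array of cut norm above `ε n²` loses
at least `ε² n²` of squared norm when a suitable rectangle of height `±ε` is subtracted. -/
lemma exists_net (n k : ℕ) {ε : ℝ} (hε : 0 < ε) :
    ∃ N : Finset (Fin n → Fin n → ℝ), (0 : Fin n → Fin n → ℝ) ∈ N ∧ N.card ≤ (2 * 4 ^ n) ^ k ∧
      ∀ D : Fin n → Fin n → ℝ, frob D ≤ k * (ε ^ 2 * n ^ 2) →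
        ∃ W ∈ N, CutLe (fun i j => D i j - W i j) (ε * n ^ 2) := by
  classical
  induction k with
  | zero =>
    refine ⟨{0}, by simp, by simp, fun D hD => ⟨0, by simp, ?_⟩⟩
    have hD0 : ∀ i j, D i j = 0 := by
      have h0 : frob D = 0 := le_antisymm (by simpa using hD)
        (Finset.sum_nonneg fun i _ => Finset.sum_nonneg fun j _ => sq_nonneg _)
      intro i j
      have h1 := (Finset.sum_eq_zero_iff_of_nonneg (fun i _ =>
        Finset.sum_nonneg fun j _ => sq_nonneg (D i j))).1 h0 i (Finset.mem_univ _)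
      have h2 := (Finset.sum_eq_zero_iff_of_nonneg (fun j _ =>
        sq_nonneg (D i j))).1 h1 j (Finset.mem_univ _)
      exact pow_eq_zero_iff (two_ne_zero) |>.1 h2
    intro S S'
    simp only [hD0]
    simp
    positivity
  | succ k ih =>
    obtain ⟨N, h0, hcard, hN⟩ := ih
    refine ⟨(N ×ˢ ((Finset.univ : Finset Bool) ×ˢ ((Finset.univ : Finset (Finset (Fin n))) ×ˢ
      (Finset.univ : Finset (Finset (Fin n)))))).image
      (fun p => fun i j => p.1 i j + rect (if p.2.1 then ε else -ε) p.2.2.1 p.2.2.2 i j),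
      ?_, ?_, ?_⟩
    · refine Finset.mem_image.2 ⟨(0, true, ∅, ∅), by simp [h0], ?_⟩
      funext i j
      simp [rect]
    · refine Finset.card_image_le.trans ?_
      rw [Finset.card_product, Finset.card_product, Finset.card_product, pow_succ]
      refine Nat.mul_le_mul hcard ?_
      simp only [Finset.card_univ, Fintype.card_bool, Fintype.card_finset, Fintype.card_fin]
      rw [← mul_pow]
      norm_num
    · intro D hD
      by_cases hcut : CutLe D (ε * n ^ 2)
      · refine ⟨0, Finset.mem_image.2 ⟨(0, true, ∅, ∅), by simp [h0], ?_⟩, by simpa using hcut⟩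
        funext i j
        simp [rect]
      · unfold CutLe at hcut
        push Not at hcut
        obtain ⟨S, S', hS⟩ := hcut
        obtain ⟨b, hb⟩ : ∃ b : Bool, ε * (ε * n ^ 2) ≤
            (if b then ε else -ε) * ∑ i ∈ S, ∑ j ∈ S', D i j := by
          rcases le_total 0 (∑ i ∈ S, ∑ j ∈ S', D i j) with h | h
          · refine ⟨true, ?_⟩
            rw [abs_of_nonneg h] at hS
            simp only [if_true]
            exact mul_le_mul_of_nonneg_left hS.le hε.le
          · refine ⟨false, ?_⟩
            rw [abs_of_nonpos h] at hS
            simp only [Bool.false_eq_true, if_false]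
            nlinarith
        have hsq : (if b then ε else -ε) ^ 2 = ε ^ 2 := by cases b <;> simp
        have hfr := frob_sub_rect D (if b then ε else -ε) S S'
        rw [hsq] at hfr
        obtain ⟨W, hW, hWc⟩ := hN (fun i j => D i j - rect (if b then ε else -ε) S S' i j) (by
          push_cast at hD
          nlinarith)
        refine ⟨_, Finset.mem_image.2 ⟨(W, b, S, S'), by simp [hW], rfl⟩, ?_⟩
        convert hWc using 3
        ring

/-! ### The entropy function and the variational functional -/

lemma Ifun_eq (u : ℝ) : Ifun u = - Real.binEntropy u := by
  unfold Ifun Real.binEntropy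
  rw [Real.log_inv, Real.log_inv]
  ring

lemma continuous_Ifun : Continuous Ifun := by
  have : Ifun = fun u => - Real.binEntropy u := funext Ifun_eq
  rw [this]
  fun_prop

lemma continuous_phiET (a b : ℝ) : Continuous (phiET a b) := by
  unfold phiET
  have := continuous_Ifun
  fun_prop

lemma phiET_le (a b : ℝ) {u : ℝ} (hu : u ∈ Set.Icc (0:ℝ) 1) : phiET a b u ≤ freeEnergy a b :=
  le_csSup (isCompact_Icc.bddAbove_image (continuous_phiET a b).continuousOn)
    (Set.mem_image_of_mem _ hu)

/-- `I(u) - u²` is convex, since `I''(u) = 1/u + 1/(1-u) ≥ 2`. -/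
lemma convexOn_Ifun_sub_sq : ConvexOn ℝ (Set.Icc (0:ℝ) 1) (fun u => Ifun u - u ^ 2) := by
  have hd : ∀ u ∈ Set.Ioo (0:ℝ) 1, HasDerivAt (fun u => Ifun u - u ^ 2)
      (Real.log u - Real.log (1 - u) - 2 * u) u := by
    intro u hu
    have h1 : HasDerivAt (fun u => Ifun u) (-(Real.log (1 - u) - Real.log u)) u := by
      simp only [Ifun_eq]
      exact (Real.hasDerivAt_binEntropy hu.1.ne' hu.2.ne).neg
    have h2 := hasDerivAt_pow 2 u
    refine (h1.sub h2).congr_deriv ?_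
    simp
  refine MonotoneOn.convexOn_of_deriv (convex_Icc 0 1)
    ((continuous_Ifun.sub (continuous_pow 2)).continuousOn) ?_ ?_
  · rw [interior_Icc]
    intro u hu
    exact (hd u hu).differentiableAt.differentiableWithinAt
  · rw [interior_Icc]
    refine MonotoneOn.congr (f₁ := fun u => Real.log u - Real.log (1 - u) - 2 * u) ?_
      (fun u hu => (hd u hu).deriv.symm)
    have hd2 : ∀ u ∈ Set.Ioo (0:ℝ) 1, HasDerivAt
        (fun u => Real.log u - Real.log (1 - u) - 2 * u) (u⁻¹ + (1 - u)⁻¹ - 2) u := by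
      intro u hu
      have h1 := Real.hasDerivAt_log hu.1.ne'
      have h2 : HasDerivAt (fun u : ℝ => 1 - u) (-1) u := by
        simpa using (hasDerivAt_id u).const_sub 1
      have h3 := h2.log (sub_pos.2 hu.2).ne'
      have h4 : HasDerivAt (fun u : ℝ => 2 * u) 2 u := by
        simpa using (hasDerivAt_id u).const_mul 2
      refine ((h1.sub h3).sub h4).congr_deriv ?_
      rw [neg_div, one_div]
      ring
    refine monotoneOn_of_deriv_nonneg (convex_Ioo 0 1) ?_ ?_ ?_
    · intro u hu
      exact (hd2 u hu).continuousAt.continuousWithinAt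
    · rw [interior_Ioo]
      intro u hu
      exact (hd2 u hu).differentiableAt.differentiableWithinAt
    · rw [interior_Ioo]
      intro u hu
      rw [(hd2 u hu).deriv]
      have h1 := (one_le_inv₀ hu.1).2 hu.2.le
      have h2 := (one_le_inv₀ (sub_pos.2 hu.2)).2 (by linarith [hu.1])
      linarith

/-! ### The mean-field variational problem -/

/-- For `α ≥ 0` the variational problem decouples entrywise because `3abc ≤ a³ + b³ + c³`. -/
lemma tri_le_cubes {n : ℕ} {M : Fin n → Fin n → ℝ} (hM : ∀ i j, M i j ∈ Set.Icc (0:ℝ) 1) :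
    tri M M M ≤ n * ∑ i, ∑ j, M i j ^ 3 := by
  have h1 : tri M M M ≤ ∑ i, ∑ j, ∑ k, (M i j ^ 3 + M j k ^ 3 + M k i ^ 3) / 3 := by
    unfold tri
    refine Finset.sum_le_sum fun i _ => Finset.sum_le_sum fun j _ =>
      Finset.sum_le_sum fun k _ => ?_
    have ha := (hM i j).1
    have hb := (hM j k).1
    have hc := (hM k i).1
    nlinarith [mul_nonneg (add_nonneg (add_nonneg ha hb) hc) (add_nonneg (add_nonneg
      (sq_nonneg (M i j - M j k)) (sq_nonneg (M j k - M k i))) (sq_nonneg (M k i - M i j)))]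
  refine h1.trans (le_of_eq ?_)
  simp only [← Finset.sum_div, Finset.sum_add_distrib]
  have e1 : ∑ i, ∑ j, ∑ _k : Fin n, M i j ^ 3 = n * ∑ i, ∑ j, M i j ^ 3 := by
    simp [Finset.mul_sum]
  have e2 : ∑ _i : Fin n, ∑ j, ∑ k, M j k ^ 3 = n * ∑ i, ∑ j, M i j ^ 3 := by
    simp
  have e3 : ∑ i, ∑ _j : Fin n, ∑ k, M k i ^ 3 = n * ∑ i, ∑ j, M i j ^ 3 := by
    rw [Finset.sum_comm (f := fun i j => M i j ^ 3)]
    simp [Finset.mul_sum]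
  rw [e1, e2, e3]
  ring

/-- Around its mean `p`, a symmetric array has `tr M³ ≥ n³p³ - n‖M - p‖²`: the linear term
vanishes, the quadratic one is `3p` times the squared norm of the row sums of `M - p`, and the
cubic one is controlled by `|M - p| ≤ 1`. -/
lemma tri_ge {n : ℕ} {M : Fin n → Fin n → ℝ} (hM : ∀ i j, M i j ∈ Set.Icc (0:ℝ) 1)
    (hs : ∀ i j, M i j = M j i) {p : ℝ} (hp : p ∈ Set.Icc (0:ℝ) 1)
    (hsum : ∑ i, ∑ j, M i j = n ^ 2 * p) :
    (n : ℝ) ^ 3 * p ^ 3 - n * ((∑ i, ∑ j, M i j ^ 2) - n ^ 2 * p ^ 2) ≤ tri M M M := by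
  set d : Fin n → Fin n → ℝ := fun i j => M i j - p with hd
  have hds : ∀ i j, d i j = d j i := fun i j => by simp only [hd, hs i j]
  have hd0 : ∑ i, ∑ j, d i j = 0 := by
    simp only [hd, Finset.sum_sub_distrib, hsum]
    simp
    ring
  have hd2 : ∑ i, ∑ j, d i j ^ 2 = (∑ i, ∑ j, M i j ^ 2) - n ^ 2 * p ^ 2 := by
    have : ∀ i j, d i j ^ 2 = M i j ^ 2 - 2 * p * M i j + p ^ 2 := fun i j => by
      simp only [hd]; ring
    simp only [this, Finset.sum_add_distrib, Finset.sum_sub_distrib, ← Finset.mul_sum, hsum]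
    simp
    ring
  have hdabs : ∀ i j, |d i j| ≤ 1 := fun i j => by
    rw [abs_le]
    constructor <;> simp only [hd] <;> linarith [(hM i j).1, (hM i j).2, hp.1, hp.2]
  have hexp : tri M M M = ∑ i, ∑ j, ∑ k, (p ^ 3 + p ^ 2 * d i j + p ^ 2 * d j k + p ^ 2 * d k i
      + p * (d i j * d j k) + p * (d j k * d k i) + p * (d k i * d i j)
      + d i j * d j k * d k i) := by
    unfold tri
    refine Finset.sum_congr rfl fun i _ => Finset.sum_congr rfl fun j _ =>
      Finset.sum_congr rfl fun k _ => ?_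
    simp only [hd]
    ring
  simp only [Finset.sum_add_distrib, ← Finset.mul_sum] at hexp
  have l1 : ∑ i, ∑ j, ∑ _k : Fin n, d i j = 0 := by
    simp only [Finset.sum_const, ← Finset.smul_sum, hd0, smul_zero]
  have l2 : ∑ _i : Fin n, ∑ j, ∑ k, d j k = 0 := by simp [hd0]
  have l3 : ∑ i, ∑ _j : Fin n, ∑ k, d k i = 0 := by
    have : ∀ i, ∑ k, d k i = ∑ k, d i k := fun i => Finset.sum_congr rfl fun k _ => hds k i
    simp only [this, Finset.sum_const, ← Finset.smul_sum, hd0, smul_zero]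
  have base : ∀ k, 0 ≤ ∑ i, ∑ j, d i k * d k j := by
    intro k
    rw [← Finset.sum_mul_sum]
    have : ∑ i, d i k = ∑ i, d k i := Finset.sum_congr rfl fun i _ => hds i k
    rw [this]
    exact mul_self_nonneg _
  have q1 : 0 ≤ ∑ i, ∑ j, ∑ k, d i j * d j k := by
    rw [Finset.sum_comm]
    exact Finset.sum_nonneg fun k _ => base k
  have q2 : 0 ≤ ∑ i, ∑ j, ∑ k, d j k * d k i := by
    have : ∀ i, ∑ j, ∑ k, d j k * d k i = ∑ k, ∑ j, d j k * d k i := fun i => Finset.sum_comm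
    simp only [this]
    rw [Finset.sum_comm]
    refine Finset.sum_nonneg fun k _ => ?_
    rw [Finset.sum_comm]
    exact base k
  have q3 : 0 ≤ ∑ i, ∑ j, ∑ k, d k i * d i j := by
    refine Finset.sum_nonneg fun k _ => ?_
    rw [Finset.sum_comm]
    exact base k
  have c1 : -(n * ∑ i, ∑ j, d i j ^ 2) ≤ ∑ i, ∑ j, ∑ k, d i j * d j k * d k i := by
    have h1 : ∑ i, ∑ j, ∑ k, -((d i j ^ 2 + d j k ^ 2) / 2) ≤
        ∑ i, ∑ j, ∑ k, d i j * d j k * d k i := by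
      refine Finset.sum_le_sum fun i _ => Finset.sum_le_sum fun j _ =>
        Finset.sum_le_sum fun k _ => ?_
      obtain ⟨h1, h2⟩ := abs_le.1 (hdabs k i)
      nlinarith [mul_nonneg (sub_nonneg.2 h2) (sq_nonneg (d i j - d j k)),
        mul_nonneg (by linarith : 0 ≤ 1 + d k i) (sq_nonneg (d i j + d j k))]
    refine le_trans (le_of_eq ?_) h1
    simp only [Finset.sum_neg_distrib, ← Finset.sum_div, Finset.sum_add_distrib]
    have e1 : ∑ i, ∑ j, ∑ _k : Fin n, d i j ^ 2 = n * ∑ i, ∑ j, d i j ^ 2 := by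
      simp [Finset.mul_sum]
    have e2 : ∑ _i : Fin n, ∑ j, ∑ k, d j k ^ 2 = n * ∑ i, ∑ j, d i j ^ 2 := by
      simp
    rw [e1, e2]
    ring
  have hc : ∑ _i : Fin n, ∑ _j : Fin n, ∑ _k : Fin n, p ^ 3 = n ^ 3 * p ^ 3 := by
    simp; ring
  simp only [← Finset.mul_sum] at q1
  rw [hexp, hc, l1, l2, l3, ← hd2]
  have := mul_nonneg hp.1 q1
  have := mul_nonneg hp.1 q2
  have := mul_nonneg hp.1 q3
  linarith

/-- The finite-`n` mean-field problem is solved by constant arrays when `α > -2`. -/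
lemma meanfield_le {n : ℕ} (hn : 0 < n) {α h : ℝ} (hα : -2 < α) {M : Fin n → Fin n → ℝ}
    (hM : ∀ i j, M i j ∈ Set.Icc (0:ℝ) 1) (hs : ∀ i j, M i j = M j i) :
    α / n * (tri M M M / 6) + h * ((∑ i, ∑ j, M i j) / 2) - (∑ i, ∑ j, Ifun (M i j)) / 2
      ≤ n ^ 2 * freeEnergy α h := by
  have hn' : (0:ℝ) < n := by exact_mod_cast hn
  rcases le_total 0 α with h0 | h0
  · have h1 : α / n * (tri M M M / 6) ≤ α / 6 * ∑ i, ∑ j, M i j ^ 3 := by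
      calc α / n * (tri M M M / 6) ≤ α / n * ((n * ∑ i, ∑ j, M i j ^ 3) / 6) := by
            have := tri_le_cubes hM
            gcongr
        _ = _ := by field_simp
    have h2 : ∑ i, ∑ j, phiET α h (M i j) ≤ n ^ 2 * freeEnergy α h := by
      calc _ ≤ ∑ _i : Fin n, ∑ _j : Fin n, freeEnergy α h :=
            Finset.sum_le_sum fun i _ => Finset.sum_le_sum fun j _ => phiET_le α h (hM i j)
        _ = _ := by simp; ring
    simp only [phiET, Finset.sum_add_distrib, Finset.sum_sub_distrib, ← Finset.mul_sum] at h2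
    linarith
  · set p : ℝ := (∑ i, ∑ j, M i j) / n ^ 2 with hpdef
    have hsum : ∑ i, ∑ j, M i j = n ^ 2 * p := by rw [hpdef]; field_simp
    have hw : ∑ _q : Fin n × Fin n, (1 / (n:ℝ) ^ 2) = 1 := by
      simp
      field_simp
    have hpw : ∑ q : Fin n × Fin n, (1 / (n:ℝ) ^ 2) • M q.1 q.2 = p := by
      rw [← Finset.smul_sum, ← Finset.univ_product_univ, Finset.sum_product, hpdef, smul_eq_mul]
      ring
    have hp : p ∈ Set.Icc (0:ℝ) 1 := by
      rw [← hpw]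
      exact (convex_Icc (0:ℝ) 1).sum_mem (fun _ _ => by positivity) hw (fun q _ => hM _ _)
    have hj := convexOn_Ifun_sub_sq.map_sum_le (t := Finset.univ)
      (w := fun _ : Fin n × Fin n => 1 / (n:ℝ) ^ 2) (p := fun q => M q.1 q.2)
      (fun _ _ => by positivity) hw (fun q _ => hM _ _)
    rw [hpw, ← Finset.smul_sum, ← Finset.univ_product_univ, Finset.sum_product, smul_eq_mul,
      ← sub_nonneg] at hj
    simp only [Finset.sum_sub_distrib] at hj
    have hj2 : n ^ 2 * (Ifun p - p ^ 2) ≤ (∑ i, ∑ j, Ifun (M i j)) - ∑ i, ∑ j, M i j ^ 2 := by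
      have := mul_nonneg (sq_nonneg (n:ℝ)) hj
      have e : (n:ℝ) ^ 2 * (1 / (n:ℝ) ^ 2 * ((∑ i, ∑ j, Ifun (M i j)) - ∑ i, ∑ j, M i j ^ 2)
          - (Ifun p - p ^ 2)) = ((∑ i, ∑ j, Ifun (M i j)) - ∑ i, ∑ j, M i j ^ 2)
          - n ^ 2 * (Ifun p - p ^ 2) := by
        field_simp
      linarith
    have ht := tri_ge hM hs hp hsum
    set V := (∑ i, ∑ j, M i j ^ 2) - n ^ 2 * p ^ 2 with hV
    have hV0 : 0 ≤ V := by
      have : ∑ i, ∑ j, (M i j - p) ^ 2 = V := by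
        have : ∀ i j, (M i j - p) ^ 2 = M i j ^ 2 - 2 * p * M i j + p ^ 2 := fun i j => by ring
        simp only [this, Finset.sum_add_distrib, Finset.sum_sub_distrib, ← Finset.mul_sum, hsum]
        simp [hV]
        ring
      rw [← this]
      positivity
    have h1 : α / n * (tri M M M / 6) ≤ α / 6 * (n ^ 2 * p ^ 3 - V) := by
      calc α / n * (tri M M M / 6) ≤ α / n * (((n : ℝ) ^ 3 * p ^ 3 - n * V) / 6) := by
            apply mul_le_mul_of_nonpos_left
            · linarith
            · exact div_nonpos_of_nonpos_of_nonneg h0 hn'.le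
        _ = _ := by field_simp
    have hphi := mul_le_mul_of_nonneg_left (phiET_le α h hp) (sq_nonneg (n:ℝ))
    unfold phiET at hphi
    rw [hsum]
    nlinarith

/-! ### Upper bound for the partition function -/

/-- Subadditivity of entropy for the uniform law on a set `K` of 0/1 vectors. -/
lemma log_card_le {ι : Type*} [Fintype ι] [DecidableEq ι] (K : Finset (ι → Bool))
    (hK : K.Nonempty) (m : ι → ℝ)
    (hm : ∀ e, m e = (∑ x ∈ K, if x e then (1:ℝ) else 0) / K.card) :
    Real.log K.card ≤ - ∑ e, Ifun (m e) := by
  have hc : (0:ℝ) < K.card := by exact_mod_cast hK.card_pos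
  -- `q` is the density of the product law with the same marginals as `K`
  set q : (ι → Bool) → ℝ := fun x => ∏ e, if x e then m e else 1 - m e with hq
  have hm1 : ∀ e, 1 - m e = (∑ x ∈ K, if x e then (0:ℝ) else 1) / K.card := by
    intro e
    rw [hm, eq_div_iff hc.ne', sub_mul, div_mul_cancel₀ _ hc.ne', sub_eq_iff_eq_add,
      ← Finset.sum_add_distrib]
    have : ∀ x : ι → Bool, ((if x e then (0:ℝ) else 1) + if x e then (1:ℝ) else 0) = 1 := by
      intro x; split_ifs <;> simp
    simp [this]
  have hm0 : ∀ e, 0 ≤ m e := fun e => by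
    rw [hm]; exact div_nonneg (Finset.sum_nonneg fun x _ => by split_ifs <;> simp) hc.le
  have hm0' : ∀ e, 0 ≤ 1 - m e := fun e => by
    rw [hm1]; exact div_nonneg (Finset.sum_nonneg fun x _ => by split_ifs <;> simp) hc.le
  have hpos : ∀ x ∈ K, ∀ e, 0 < if x e then m e else 1 - m e := by
    intro x hx e
    split_ifs with h
    · rw [hm]
      refine div_pos (Finset.sum_pos' (fun x _ => by split_ifs <;> simp) ⟨x, hx, by simp [h]⟩) hc
    · rw [hm1]
      refine div_pos (Finset.sum_pos' (fun x _ => by split_ifs <;> simp) ⟨x, hx, by simp [h]⟩) hc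
  have hqtot : ∑ x ∈ K, q x ≤ 1 := by
    calc ∑ x ∈ K, q x ≤ ∑ x, q x := Finset.sum_le_sum_of_subset_of_nonneg (Finset.subset_univ _)
          fun x _ _ => Finset.prod_nonneg fun e _ => by split_ifs; exacts [hm0 e, hm0' e]
      _ = 1 := by
          have := (Finset.prod_univ_sum (fun _ : ι => (Finset.univ : Finset Bool))
            (fun e b => if b then m e else 1 - m e)).symm
          rw [Fintype.piFinset_univ] at this
          rw [hq, this]
          simp
  have hlog : ∀ x ∈ K, Real.log (q x) + Real.log K.card ≤ q x * K.card - 1 := by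
    intro x hx
    have hqx : 0 < q x := Finset.prod_pos fun e _ => hpos x hx e
    rw [← Real.log_mul hqx.ne' hc.ne']
    exact Real.log_le_sub_one_of_pos (mul_pos hqx hc)
  have hsum := Finset.sum_le_sum hlog
  rw [Finset.sum_add_distrib, Finset.sum_sub_distrib, ← Finset.sum_mul] at hsum
  simp only [Finset.sum_const, nsmul_eq_mul, mul_one] at hsum
  have hlq : ∑ x ∈ K, Real.log (q x) = K.card * ∑ e, Ifun (m e) := by
    have h1 : ∀ x ∈ K, Real.log (q x) = ∑ e, ((if x e then (1:ℝ) else 0) * Real.log (m e)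
        + (if x e then (0:ℝ) else 1) * Real.log (1 - m e)) := by
      intro x hx
      rw [hq, Real.log_prod fun e _ => (hpos x hx e).ne']
      refine Finset.sum_congr rfl fun e _ => ?_
      split_ifs <;> simp
    rw [Finset.sum_congr rfl h1, Finset.sum_comm, Finset.mul_sum]
    refine Finset.sum_congr rfl fun e _ => ?_
    rw [Finset.sum_add_distrib, ← Finset.sum_mul, ← Finset.sum_mul]
    have a1 : (∑ x ∈ K, if x e then (1:ℝ) else 0) = K.card * m e := by rw [hm]; field_simp
    have a2 : (∑ x ∈ K, if x e then (0:ℝ) else 1) = K.card * (1 - m e) := by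
      rw [hm1]; field_simp
    rw [a1, a2, Ifun]
    ring
  rw [hlq] at hsum
  have h2 : (K.card : ℝ) * (∑ e, Ifun (m e) + Real.log K.card) ≤ 0 := by
    nlinarith
  have h3 := nonpos_of_mul_nonpos_right h2 hc
  linarith

/-- Contribution to the partition function of configurations lying in one small cut-norm ball:
on it the Hamiltonian is nearly the one of the barycentre `m`, and the number of
configurations is at most `exp (-∑ I(mₑ))`. -/
lemma ball_sum_le {n : ℕ} (hn : 0 < n) {α h : ℝ} (hα : -2 < α) {ε : ℝ}
    (W : Fin n → Fin n → ℝ) (K : Finset (Config n))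
    (hK : ∀ x ∈ K, CutLe (fun i j => lift (wt x) i j - W i j) (ε * n ^ 2)) :
    ∑ x ∈ K, Real.exp (ham n α h x) ≤
      Real.exp (n ^ 2 * (freeEnergy α h + (|α| + |h|) * ε)) := by
  classical
  have hn' : (0:ℝ) < n := by exact_mod_cast hn
  rcases K.eq_empty_or_nonempty with rfl | hne
  · simpa using (Real.exp_pos _).le
  have hc : (0:ℝ) < K.card := by exact_mod_cast hne.card_pos
  set m : Edge n → ℝ := fun e => (∑ x ∈ K, wt x e) / K.card with hm
  have hmI : ∀ e, m e ∈ Set.Icc (0:ℝ) 1 := by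
    intro e
    refine ⟨div_nonneg (Finset.sum_nonneg fun x _ => (wt_mem x e).1) hc.le, ?_⟩
    rw [hm, div_le_one hc]
    calc ∑ x ∈ K, wt x e ≤ ∑ _x ∈ K, (1:ℝ) := Finset.sum_le_sum fun x _ => (wt_mem x e).2
      _ = K.card := by simp
  have hliftm : ∀ i j, lift m i j = (∑ x ∈ K, lift (wt x) i j) / K.card := by
    intro i j
    unfold lift
    split_ifs <;> simp [hm]
  have hclose : ∀ x ∈ K, CutLe (fun i j => lift (wt x) i j - lift m i j) (2 * (ε * n ^ 2)) := by
    intro x hx S S'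
    have hmW : |∑ i ∈ S, ∑ j ∈ S', (lift m i j - W i j)| ≤ ε * n ^ 2 := by
      have e : ∑ i ∈ S, ∑ j ∈ S', (lift m i j - W i j) =
          (∑ y ∈ K, ∑ i ∈ S, ∑ j ∈ S', (lift (wt y) i j - W i j)) / K.card := by
        rw [Finset.sum_comm (s := K), Finset.sum_div]
        refine Finset.sum_congr rfl fun i _ => ?_
        rw [Finset.sum_comm (s := K), Finset.sum_div]
        refine Finset.sum_congr rfl fun j _ => ?_
        rw [hliftm, Finset.sum_sub_distrib]
        simp
        field_simp
      rw [e, abs_div, abs_of_pos hc, div_le_iff₀ hc]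
      calc _ ≤ ∑ y ∈ K, ε * (n:ℝ) ^ 2 :=
            (Finset.abs_sum_le_sum_abs _ _).trans (Finset.sum_le_sum fun y hy => hK y hy S S')
        _ = _ := by simp; ring
    have e2 : ∑ i ∈ S, ∑ j ∈ S', (lift (wt x) i j - lift m i j) =
        ∑ i ∈ S, ∑ j ∈ S', (lift (wt x) i j - W i j)
          - ∑ i ∈ S, ∑ j ∈ S', (lift m i j - W i j) := by
      simp only [← Finset.sum_sub_distrib]
      refine Finset.sum_congr rfl fun i _ => Finset.sum_congr rfl fun j _ => ?_
      ring
    have := hK x hx S S'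
    rw [e2]
    refine (abs_sub _ _).trans ?_
    linarith
  have hham : ∀ x ∈ K, ham n α h x ≤ α / n * (tri (lift m) (lift m) (lift m) / 6)
      + h * ((∑ i, ∑ j, lift m i j) / 2) + n ^ 2 * ((|α| + |h|) * ε) := by
    intro x hx
    have ht := tri_close (lift_mem _ (wt_mem x)) (lift_mem _ hmI) (hclose x hx)
    have he := hclose x hx Finset.univ Finset.univ
    simp only [Finset.sum_sub_distrib] at he
    unfold ham
    rw [triangleCount_eq, edgeCount_eq]
    have h2 := sum_lift (wt x)
    have a1 : α / n * (tri (lift (wt x)) (lift (wt x)) (lift (wt x)) / 6) -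
        α / n * (tri (lift m) (lift m) (lift m) / 6) ≤ n ^ 2 * (|α| * ε) := by
      calc _ = α * ((tri (lift (wt x)) (lift (wt x)) (lift (wt x))
              - tri (lift m) (lift m) (lift m)) / (6 * n)) := by field_simp
        _ ≤ |α * ((tri (lift (wt x)) (lift (wt x)) (lift (wt x))
              - tri (lift m) (lift m) (lift m)) / (6 * n))| := le_abs_self _
        _ = |α| * (|tri (lift (wt x)) (lift (wt x)) (lift (wt x))
              - tri (lift m) (lift m) (lift m)| / (6 * n)) := by
            rw [abs_mul, abs_div, abs_of_pos (by positivity : (0:ℝ) < 6 * n)]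
        _ ≤ |α| * ((3 * n * (2 * (ε * n ^ 2))) / (6 * n)) := by gcongr
        _ = _ := by field_simp; ring
    have a2 : h * ∑ e, wt x e - h * ((∑ i, ∑ j, lift m i j) / 2) ≤ n ^ 2 * (|h| * ε) := by
      calc _ = h * (((∑ i, ∑ j, lift (wt x) i j) - ∑ i, ∑ j, lift m i j) / 2) := by
            rw [h2]; ring
        _ ≤ |h * (((∑ i, ∑ j, lift (wt x) i j) - ∑ i, ∑ j, lift m i j) / 2)| := le_abs_self _
        _ = |h| * (|(∑ i, ∑ j, lift (wt x) i j) - ∑ i, ∑ j, lift m i j| / 2) := by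
            rw [abs_mul, abs_div, abs_of_pos (by norm_num : (0:ℝ) < 2)]
        _ ≤ |h| * ((2 * (ε * n ^ 2)) / 2) := by gcongr
        _ = _ := by ring
    linarith
  have hent := log_card_le K hne m (fun e => by simp only [hm, wt])
  have hIsum : ∑ i, ∑ j, Ifun (lift m i j) = 2 * ∑ e, Ifun (m e) := by
    simp only [lift_comp Ifun (by simp [Ifun])]
    exact sum_lift _
  have hmf := meanfield_le (h := h) hn hα (lift_mem _ hmI) (lift_symm m)
  rw [hIsum] at hmf
  calc ∑ x ∈ K, Real.exp (ham n α h x)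
      ≤ ∑ _x ∈ K, Real.exp (α / n * (tri (lift m) (lift m) (lift m) / 6)
      + h * ((∑ i, ∑ j, lift m i j) / 2) + n ^ 2 * ((|α| + |h|) * ε)) :=
        Finset.sum_le_sum fun x hx => Real.exp_le_exp.2 (hham x hx)
    _ = Real.exp (Real.log K.card + (α / n * (tri (lift m) (lift m) (lift m) / 6)
      + h * ((∑ i, ∑ j, lift m i j) / 2) + n ^ 2 * ((|α| + |h|) * ε))) := by
        rw [Real.exp_add (Real.log _), Real.exp_log hc]; simp
    _ ≤ _ := Real.exp_le_exp.2 (by linarith)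

lemma Zet_pos (n : ℕ) (α h : ℝ) : 0 < Zet n α h :=
  Finset.sum_pos (fun _ _ => Real.exp_pos _) Finset.univ_nonempty

/-- Non-asymptotic upper bound for the partition function. -/
lemma log_Zet_le {n : ℕ} (hn : 0 < n) {α h : ℝ} (hα : -2 < α) {ε : ℝ} (hε : 0 < ε) {k : ℕ}
    (hk : 1 ≤ k * ε ^ 2) :
    Real.log (Zet n α h) ≤ k * (Real.log 2 + n * Real.log 4)
      + n ^ 2 * (freeEnergy α h + (|α| + |h|) * ε) := by
  classical
  obtain ⟨N, -, hcard, hN⟩ := exists_net n k hε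
  set B := Real.exp (n ^ 2 * (freeEnergy α h + (|α| + |h|) * ε)) with hB
  have hZ : Zet n α h ≤ (2 * 4 ^ n) ^ k * B := by
    have hcover : ∀ x : Config n, ∃ W ∈ N,
        CutLe (fun i j => lift (wt x) i j - W i j) (ε * n ^ 2) := by
      intro x
      apply hN
      calc frob (lift (wt x)) ≤ ∑ _i : Fin n, ∑ _j : Fin n, (1:ℝ) := by
            refine Finset.sum_le_sum fun i _ => Finset.sum_le_sum fun j _ => ?_
            obtain ⟨h0, h1⟩ := lift_mem _ (wt_mem x) i j
            nlinarith
        _ = 1 * (n:ℝ) ^ 2 := by simp; ring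
        _ ≤ (k * ε ^ 2) * n ^ 2 := by gcongr
        _ = _ := by ring
    choose c hcN hc using hcover
    calc Zet n α h = ∑ W ∈ N, ∑ x ∈ Finset.univ.filter (fun x => c x = W),
          Real.exp (ham n α h x) :=
          (Finset.sum_fiberwise_of_maps_to (fun x _ => hcN x) _).symm
      _ ≤ ∑ _W ∈ N, B := by
          refine Finset.sum_le_sum fun W _ => ball_sum_le hn hα W _ ?_
          intro x hx
          rw [← (Finset.mem_filter.1 hx).2]
          exact hc x
      _ = N.card * B := by simp
      _ ≤ (2 * 4 ^ n) ^ k * B := by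
          refine mul_le_mul_of_nonneg_right ?_ (Real.exp_pos _).le
          exact_mod_cast hcard
  have h1 := Real.log_le_log (Zet_pos n α h) hZ
  rw [Real.log_mul (by positivity) (Real.exp_pos _).ne', Real.log_exp, Real.log_pow,
    Real.log_mul (by norm_num) (by positivity), Real.log_pow] at h1
  exact h1

/-! ### Lower bound for the partition function -/

/-- The weight of `x` under the product Bernoulli law of parameter `u`. -/
def bern {ι : Type*} [Fintype ι] (u : ℝ) (x : ι → Bool) : ℝ := ∏ e, if x e then u else 1 - u

lemma sum_bern {ι : Type*} [Fintype ι] [DecidableEq ι] (u : ℝ) (S : Finset ι) :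
    ∑ x : ι → Bool, bern u x * (if ∀ e ∈ S, x e then 1 else 0) = u ^ S.card := by
  have h1 : ∀ x : ι → Bool, bern u x * (if ∀ e ∈ S, x e then 1 else 0) =
      ∏ e, (if x e then u else if e ∈ S then 0 else 1 - u) := by
    intro x
    split_ifs with h
    · rw [mul_one]
      refine Finset.prod_congr rfl fun e _ => ?_
      by_cases hx : x e
      · simp [hx]
      · have : e ∉ S := fun he => hx (h e he)
        simp [hx, this]
    · push Not at h
      obtain ⟨e, he, hx⟩ := h
      rw [mul_zero, eq_comm]
      exact Finset.prod_eq_zero (Finset.mem_univ e) (by simp [he, hx])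
  have h2 := (Finset.prod_univ_sum (fun _ : ι => (Finset.univ : Finset Bool))
    (fun e b => if b then u else if e ∈ S then 0 else 1 - u)).symm
  rw [Fintype.piFinset_univ] at h2
  rw [Finset.sum_congr rfl fun x _ => h1 x, h2]
  have h3 : ∀ e, ∑ b : Bool, (if b then u else if e ∈ S then 0 else 1 - u)
      = if e ∈ S then u else 1 := by
    intro e
    by_cases he : e ∈ S <;> simp [he]
  simp only [h3]
  rw [Finset.prod_ite_mem]
  simp

lemma sum_bern_one {ι : Type*} [Fintype ι] [DecidableEq ι] (u : ℝ) :
    ∑ x : ι → Bool, bern u x = 1 := by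
  have := sum_bern (ι := ι) u ∅
  simpa using this

lemma sum_bern_edge (n : ℕ) (u : ℝ) :
    ∑ x : Config n, bern u x * (edgeCount n x : ℝ) = n.choose 2 * u := by
  classical
  simp only [edgeCount_eq, Finset.mul_sum]
  rw [Finset.sum_comm]
  have : ∀ e : Edge n, ∑ x : Config n, bern u x * wt x e = u := by
    intro e
    have := sum_bern u ({e} : Finset (Edge n))
    simpa [wt] using this
  simp only [this]
  have hc : Fintype.card (Edge n) = n.choose 2 := by
    have := Sym2.card_subtype_not_diag (α := Fin n)
    rw [Fintype.card_fin] at this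
    rw [← this]
  rw [Finset.sum_const, Finset.card_univ, hc, nsmul_eq_mul]

lemma sum_bern_triangle (n : ℕ) (u : ℝ) :
    ∑ x : Config n, bern u x * (triangleCount n x : ℝ) = n.choose 3 * u ^ 3 := by
  classical
  have h1 : ∀ x : Config n, (triangleCount n x : ℝ) =
      ∑ s ∈ Finset.powersetCard 3 (Finset.univ : Finset (Fin n)),
        if ∀ e : Edge n, (∀ v ∈ (e : Sym2 (Fin n)), v ∈ s) → x e then (1:ℝ) else 0 := by
    intro x
    unfold triangleCount
    rw [Finset.card_filter]
    push_cast
    rfl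
  simp only [h1, Finset.mul_sum]
  rw [Finset.sum_comm]
  have h2 : ∀ s ∈ Finset.powersetCard 3 (Finset.univ : Finset (Fin n)),
      ∑ x : Config n, bern u x *
        (if ∀ e : Edge n, (∀ v ∈ (e : Sym2 (Fin n)), v ∈ s) → x e then (1:ℝ) else 0) = u ^ 3 := by
    intro s hs
    obtain ⟨a, b, c, hab, hac, hbc, rfl⟩ :=
      Finset.card_eq_three.1 (Finset.mem_powersetCard.1 hs).2
    have hS := sum_bern u ({⟨s(a, b), by simpa using hab⟩, ⟨s(b, c), by simpa using hbc⟩,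
      ⟨s(c, a), by simpa using hac.symm⟩} : Finset (Edge n))
    rw [Finset.card_eq_three.2 ⟨_, _, _, ?_, ?_, ?_, rfl⟩] at hS
    · rw [← hS]
      refine Finset.sum_congr rfl fun x _ => ?_
      congr 1
      refine if_congr ?_ rfl rfl
      rw [forall_edge_triple hab hac hbc (fun e => x e = true)]
      simp
    all_goals
      simp only [ne_eq, Subtype.mk.injEq, Sym2.eq_iff]
      grind
  rw [Finset.sum_congr rfl h2]
  simp

/-- Gibbs variational lower bound with the homogeneous Bernoulli trial law. -/
lemma le_log_Zet (n : ℕ) (α h : ℝ) {u : ℝ} (hu : u ∈ Set.Ioo (0:ℝ) 1) :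
    α / n * (n.choose 3 * u ^ 3) + h * (n.choose 2 * u) - n.choose 2 * Ifun u
      ≤ Real.log (Zet n α h) := by
  classical
  have hu1 : 0 < 1 - u := sub_pos.2 hu.2
  have hZ := Zet_pos n α h
  have hb : ∀ x : Config n, 0 < bern u x := fun x =>
    Finset.prod_pos fun e _ => by split_ifs; exacts [hu.1, hu1]
  have hlogb : ∀ x : Config n, Real.log (bern u x) =
      edgeCount n x * (Real.log u - Real.log (1 - u)) + n.choose 2 * Real.log (1 - u) := by
    intro x
    have hc : (n.choose 2 : ℝ) = ∑ _e : Edge n, (1:ℝ) := by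
      have := Sym2.card_subtype_not_diag (α := Fin n)
      rw [Fintype.card_fin] at this
      rw [← this]
      simp
    rw [bern, Real.log_prod fun e _ => by split_ifs; exacts [hu.1.ne', hu1.ne'], edgeCount_eq, hc,
      Finset.sum_mul, Finset.sum_mul, ← Finset.sum_add_distrib]
    refine Finset.sum_congr rfl fun e _ => ?_
    unfold wt
    split_ifs <;> ring
  have hx : ∀ x : Config n, bern u x * (ham n α h x - Real.log (bern u x) - Real.log (Zet n α h))
      ≤ Real.exp (ham n α h x) / Zet n α h - bern u x := by
    intro x
    have hy : 0 < Real.exp (ham n α h x) / Zet n α h / bern u x :=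
      div_pos (div_pos (Real.exp_pos _) hZ) (hb x)
    have h1 := Real.log_le_sub_one_of_pos hy
    rw [Real.log_div (div_pos (Real.exp_pos _) hZ).ne' (hb x).ne',
      Real.log_div (Real.exp_pos _).ne' hZ.ne', Real.log_exp] at h1
    have h2 := mul_le_mul_of_nonneg_left h1 (hb x).le
    have h3 : bern u x * (Real.exp (ham n α h x) / Zet n α h / bern u x - 1)
        = Real.exp (ham n α h x) / Zet n α h - bern u x := by
      have := (hb x).ne'
      field_simp
    rw [h3] at h2
    linarith
  have hsum := Finset.sum_le_sum fun x (_ : x ∈ Finset.univ) => hx x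
  rw [Finset.sum_sub_distrib, ← Finset.sum_div, sum_bern_one] at hsum
  have hZ1 : (∑ x : Config n, Real.exp (ham n α h x)) / Zet n α h = 1 := div_self hZ.ne'
  rw [hZ1, sub_self] at hsum
  have hlhs : ∑ x : Config n,
      bern u x * (ham n α h x - Real.log (bern u x) - Real.log (Zet n α h)) =
      α / n * (n.choose 3 * u ^ 3) + h * (n.choose 2 * u) - n.choose 2 * Ifun u
        - Real.log (Zet n α h) := by
    have e : ∀ x : Config n,
        bern u x * (ham n α h x - Real.log (bern u x) - Real.log (Zet n α h)) =
        α / n * (bern u x * triangleCount n x)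
        + (h - (Real.log u - Real.log (1 - u))) * (bern u x * edgeCount n x)
        - (n.choose 2 * Real.log (1 - u) + Real.log (Zet n α h)) * bern u x := by
      intro x
      rw [hlogb, ham]
      ring
    simp only [e, Finset.sum_add_distrib, Finset.sum_sub_distrib, ← Finset.mul_sum,
      sum_bern_one, sum_bern_edge, sum_bern_triangle, Ifun]
    ring
  rw [hlhs] at hsum
  linarith

/-! ### The limit -/

lemma tendsto_choose_two :
    Tendsto (fun n : ℕ => (n.choose 2 : ℝ) / (n:ℝ) ^ 2) atTop (𝓝 (1 / 2)) := by
  have h0 : Tendsto (fun n : ℕ => ((n:ℝ))⁻¹) atTop (𝓝 0) := tendsto_inv_atTop_nhds_zero_nat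
  have h1 : Tendsto (fun n : ℕ => (1 - ((n:ℝ))⁻¹) / 2) atTop (𝓝 ((1 - 0) / 2)) :=
    (h0.const_sub 1).div_const 2
  rw [sub_zero] at h1
  refine h1.congr' ?_
  filter_upwards [eventually_gt_atTop 0] with n hn
  have hn' : (n:ℝ) ≠ 0 := by exact_mod_cast hn.ne'
  rw [Nat.cast_choose_two]
  field_simp

lemma tendsto_choose_three :
    Tendsto (fun n : ℕ => (n.choose 3 : ℝ) / (n:ℝ) ^ 3) atTop (𝓝 (1 / 6)) := by
  have h0 : Tendsto (fun n : ℕ => ((n:ℝ))⁻¹) atTop (𝓝 0) := tendsto_inv_atTop_nhds_zero_nat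
  have h1 : Tendsto (fun n : ℕ => (1 - ((n:ℝ))⁻¹) * (1 - 2 * ((n:ℝ))⁻¹) / 6) atTop
      (𝓝 ((1 - 0) * (1 - 2 * 0) / 6)) :=
    ((h0.const_sub 1).mul ((h0.const_mul 2).const_sub 1)).div_const 6
  norm_num at h1
  norm_num
  refine h1.congr' ?_
  filter_upwards [eventually_gt_atTop 2] with n hn
  have hn' : (n:ℝ) ≠ 0 := by
    have : n ≠ 0 := by omega
    exact_mod_cast this
  have h3 : (n.choose 3 : ℝ) = n * (n - 1) * (n - 2) / 6 := by
    have := Nat.cast_choose_eq_ascPochhammer_div ℝ n 3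
    obtain ⟨k, rfl⟩ : ∃ k, n = k + 2 := ⟨n - 2, by omega⟩
    rw [this]
    simp [ascPochhammer_succ_eval, Nat.factorial]
    ring
  rw [h3]
  field_simp

theorem free_energy_limit (α h : ℝ) (hα : α > -2) :
    Tendsto (fun n : ℕ => 1 / (n : ℝ) ^ 2 * Real.log (Zet n α h)) atTop
      (𝓝 (freeEnergy α h)) := by
  rw [tendsto_order]
  constructor
  · intro a ha
    -- the supremum may be approached from the open interval, where `log u` and `log (1 - u)`
    -- are genuine
    obtain ⟨u, hu, hau⟩ : ∃ u ∈ Set.Ioo (0:ℝ) 1, a < phiET α h u := by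
      obtain ⟨_, ⟨v, hv, rfl⟩, hav⟩ :=
        exists_lt_of_lt_csSup ((Set.nonempty_Icc.2 zero_le_one).image (phiET α h)) ha
      rw [← closure_Ioo (zero_ne_one' ℝ)] at hv
      obtain ⟨u, hu1, hu2⟩ := mem_closure_iff.1 hv _
        (isOpen_lt continuous_const (continuous_phiET α h)) hav
      exact ⟨u, hu2, hu1⟩
    have hlim : Tendsto (fun n : ℕ => α * u ^ 3 * ((n.choose 3 : ℝ) / (n:ℝ) ^ 3)
        + (h * u - Ifun u) * ((n.choose 2 : ℝ) / (n:ℝ) ^ 2)) atTop (𝓝 (phiET α h u)) := by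
      have := (tendsto_choose_three.const_mul (α * u ^ 3)).add
        (tendsto_choose_two.const_mul (h * u - Ifun u))
      convert this using 2
      unfold phiET
      ring
    filter_upwards [hlim.eventually_const_lt hau, eventually_gt_atTop 0] with n hn hn0
    have hn' : (0:ℝ) < n := by exact_mod_cast hn0
    refine hn.trans_le ?_
    have hle := mul_le_mul_of_nonneg_left (le_log_Zet n α h hu)
      (by positivity : 0 ≤ 1 / (n:ℝ) ^ 2)
    refine le_trans (le_of_eq ?_) hle
    field_simp
    ring
  · intro a ha
    set δ := a - freeEnergy α h with hδ
    have hδ0 : 0 < δ := sub_pos.2 ha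
    set ε := δ / (2 * (|α| + |h| + 1)) with hεdef
    have hC : 0 < |α| + |h| + 1 := by positivity
    have hε : 0 < ε := by positivity
    have hεC : (|α| + |h|) * ε ≤ δ / 2 := by
      have : (|α| + |h| + 1) * ε = δ / 2 := by rw [hεdef]; field_simp
      nlinarith
    obtain ⟨k, hk⟩ := exists_nat_ge (1 / ε ^ 2)
    have hk1 : 1 ≤ k * ε ^ 2 := by
      rwa [div_le_iff₀ (by positivity)] at hk
    have h0 : Tendsto (fun n : ℕ => ((n:ℝ))⁻¹) atTop (𝓝 0) := tendsto_inv_atTop_nhds_zero_nat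
    have hlim : Tendsto (fun n : ℕ => k * (Real.log 2 * ((n:ℝ)⁻¹ * (n:ℝ)⁻¹)
        + Real.log 4 * (n:ℝ)⁻¹)) atTop (𝓝 0) := by
      have := (((h0.mul h0).const_mul (Real.log 2)).add
        (h0.const_mul (Real.log 4))).const_mul (k:ℝ)
      simpa using this
    filter_upwards [hlim.eventually_lt_const (half_pos hδ0), eventually_gt_atTop 0] with n hn hn0
    have hn' : (0:ℝ) < n := by exact_mod_cast hn0
    have hle := mul_le_mul_of_nonneg_left (log_Zet_le (h := h) hn0 hα hε hk1)
      (by positivity : 0 ≤ 1 / (n:ℝ) ^ 2)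
    have e : 1 / (n:ℝ) ^ 2 * (k * (Real.log 2 + n * Real.log 4)
        + n ^ 2 * (freeEnergy α h + (|α| + |h|) * ε)) =
        k * (Real.log 2 * ((n:ℝ)⁻¹ * (n:ℝ)⁻¹) + Real.log 4 * (n:ℝ)⁻¹)
        + (freeEnergy α h + (|α| + |h|) * ε) := by
      field_simp
    linarith
end
end

section
/- Fix n ≥ 3, α, h ∈ ℝ, and t ∈ ℝ. Then |E_{n;α,h}(exp(t·W_n)) − Ê_{n;α,h}(exp(t·W_n))| ≤ √(Ê_{n;α,h}(exp(2t·W_n))) · √(Ê_{n;α,h}(exp(2α·{T(x)/n})) − (Ê_{n;α,h}(exp(α·{T(x)/n})))²) / Ê_{n;α,h}(exp(α·{T(x)/n})), where W_n = √6·(⌊T(x)/n⌋ − Ê_{n;α,h}(⌊T(x)/n⌋))/n and {y} = y − ⌊y⌋ denotes the fractional part. -/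
/-!
The two Hamiltonians differ by `α` times the fractional part of `T/n`:
`H = Ĥ + α {T/n}` (`exp_ham`). Hence, with `g = exp (α {T/n})`, the measure of `H` is the measure of
`Ĥ` tilted by `g`, that is `E f = Ê (f g) / Ê g` (`expEt_eq_tilt`), so that
`E f - Ê f = Ê (f (g - Ê g)) / Ê g`. The Cauchy–Schwarz inequality for `Ê` (`expHat_mul_sq_le`)
bounds the numerator by `√(Ê f²) √(Var g)`; taking `f = exp (t W_n)` gives the claim.
-/

open MeasureTheory Filter ProbabilityTheory Topology

noncomputable section

theorem Zhat_pos (n : ℕ) (α h : ℝ) : 0 < Zhat n α h :=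
  Finset.sum_pos (fun _ _ => Real.exp_pos _) Finset.univ_nonempty

theorem expHat_pos (n : ℕ) (α h : ℝ) (f : Config n → ℝ) (hf : ∀ x, 0 < f x) :
    0 < expHat n α h f :=
  div_pos (Finset.sum_pos (fun x _ => mul_pos (hf x) (Real.exp_pos _)) Finset.univ_nonempty)
    (Zhat_pos n α h)

theorem expHat_sub (n : ℕ) (α h : ℝ) (f g : Config n → ℝ) :
    expHat n α h (fun x => f x - g x) = expHat n α h f - expHat n α h g := by
  simp only [expHat, sub_mul, Finset.sum_sub_distrib, sub_div]

theorem expHat_add (n : ℕ) (α h : ℝ) (f g : Config n → ℝ) :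
    expHat n α h (fun x => f x + g x) = expHat n α h f + expHat n α h g := by
  simp only [expHat, add_mul, Finset.sum_add_distrib, add_div]

theorem expHat_mul_const (n : ℕ) (α h : ℝ) (f : Config n → ℝ) (c : ℝ) :
    expHat n α h (fun x => f x * c) = expHat n α h f * c := by
  simp only [expHat, mul_right_comm _ c, ← Finset.sum_mul]
  ring

theorem expHat_const (n : ℕ) (α h c : ℝ) : expHat n α h (fun _ => c) = c := by
  have hZ := (Zhat_pos n α h).ne'
  simp only [expHat, ← Finset.mul_sum]
  exact mul_div_cancel_right₀ c hZ

theorem exp_ham (n : ℕ) (α h : ℝ) (x : Config n) :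
    Real.exp (ham n α h x) = Real.exp (α * fracTn n x) * Real.exp (hamHat n α h x) := by
  rw [← Real.exp_add]
  congr 1
  simp only [ham, hamHat, fracTn]
  ring

/-- The Gibbs measure of `H` is the tilt of the Gibbs measure of `Ĥ` by `exp (α {T/n})`. -/
theorem expEt_eq_tilt (n : ℕ) (α h : ℝ) (f : Config n → ℝ) :
    expEt n α h f = expHat n α h (fun x => f x * Real.exp (α * fracTn n x)) /
      expHat n α h (fun x => Real.exp (α * fracTn n x)) := by
  have hZ := (Zhat_pos n α h).ne'
  simp only [expEt, Zet, expHat, exp_ham, mul_assoc]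
  rw [div_div_div_cancel_right₀ hZ]

/-- Cauchy–Schwarz for the Gibbs expectation `Ê`. -/
theorem expHat_mul_sq_le (n : ℕ) (α h : ℝ) (f g : Config n → ℝ) :
    expHat n α h (fun x => f x * g x) ^ 2 ≤
      expHat n α h (fun x => f x ^ 2) * expHat n α h (fun x => g x ^ 2) := by
  have hZ := Zhat_pos n α h
  simp only [expHat]
  rw [div_pow, div_mul_div_comm, ← sq]
  refine div_le_div_of_nonneg_right ?_ (by positivity)
  exact Finset.sum_sq_le_sum_mul_sum_of_sq_le_mul _ (fun x _ => by positivity)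
    (fun x _ => by positivity) (fun x _ => le_of_eq (by ring))

/-- The variance formula `Ê (g - Ê g)² = Ê g² - (Ê g)²`. -/
theorem expHat_sub_mean_sq (n : ℕ) (α h : ℝ) (g : Config n → ℝ) :
    expHat n α h (fun x => (g x - expHat n α h g) ^ 2) =
      expHat n α h (fun x => g x ^ 2) - expHat n α h g ^ 2 := by
  set m := expHat n α h g with hm
  have h1 : (fun x => (g x - m) ^ 2) = fun x => (g x ^ 2 - g x * (2 * m)) + m ^ 2 := by
    funext x
    ring
  rw [h1, expHat_add, expHat_sub, expHat_mul_const, expHat_const, ← hm]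
  ring

theorem mgf_comparison_bound (n : ℕ) (hn : 3 ≤ n) (α h t : ℝ) :
    |expEt n α h (fun x => Real.exp (t * Wfl n α h x)) -
        expHat n α h (fun x => Real.exp (t * Wfl n α h x))| ≤
      Real.sqrt (expHat n α h (fun x => Real.exp (2 * t * Wfl n α h x))) *
        Real.sqrt (expHat n α h (fun x => Real.exp (2 * α * fracTn n x)) -
          expHat n α h (fun x => Real.exp (α * fracTn n x)) ^ 2) /
        expHat n α h (fun x => Real.exp (α * fracTn n x)) := by
  set f : Config n → ℝ := fun x => Real.exp (t * Wfl n α h x) with hf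
  set g : Config n → ℝ := fun x => Real.exp (α * fracTn n x) with hg
  have hf2 : (fun x => Real.exp (2 * t * Wfl n α h x)) = fun x => f x ^ 2 := by
    funext x
    rw [hf, ← Real.exp_nat_mul]
    push_cast
    ring_nf
  have hg2 : (fun x => Real.exp (2 * α * fracTn n x)) = fun x => g x ^ 2 := by
    funext x
    rw [hg, ← Real.exp_nat_mul]
    push_cast
    ring_nf
  have hpos : 0 < expHat n α h g := expHat_pos n α h g fun x => Real.exp_pos _
  have hdiff : expEt n α h f - expHat n α h f =
      expHat n α h (fun x => f x * (g x - expHat n α h g)) / expHat n α h g := by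
    rw [expEt_eq_tilt]
    simp only [mul_sub]
    rw [expHat_sub, expHat_mul_const, sub_div, mul_div_cancel_right₀ _ hpos.ne']
  rw [hf2, hg2, hdiff, abs_div, abs_of_pos hpos, ← expHat_sub_mean_sq]
  refine div_le_div_of_nonneg_right ?_ hpos.le
  rw [← Real.sqrt_mul' _ ?_]
  · exact Real.abs_le_sqrt (expHat_mul_sq_le n α h f fun x => g x - expHat n α h g)
  · exact div_nonneg (Finset.sum_nonneg fun x _ => by positivity) (Zhat_pos n α h).le
end
end
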